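/- Let n ≥ 2 be a natural number. Let f and g be continuous self-maps of the unit circle in ℂ and let π be a continuous self-map of the circle that is a covering map, such that π ∘ g = f ∘ π. If f is topologically conjugate to the map z ↦ zⁿ (i.e., there is a self-homeomorphism h of the circle with h(f z) = (h z)ⁿ for all z), then g is topologically conjugate to z ↦ zⁿ (i.e., there is a self-homeomorphism h' of the circle with h'(g z) = (h' z)ⁿ for all z). -/

import Mathlib

/-!
Every covering map `p` of the circle is a power of a homeomorphism: `p z = (k z) ^ d` with `k` a
self-homeomorphism and `d ≠ 0` (`exists_homeomorph_zpow`). Indeed `p ∘ exp` lifts through `exp` to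
a local homeomorphism `P : ℝ → ℝ`, which is injective by Rolle's argument, since an open map has no
local extremum. It satisfies `P (x + 2π) = P x + 2πd` for some integer `d`, so `P / d` is an
injective continuous map commuting with the translation by `2π` and descends to `k`
(`exists_homeomorph_of_equivariant`).

Apply this to `p = h ∘ π`, where `h` conjugates `f` to `z ↦ zⁿ`. From `π ∘ g = f ∘ π` one gets
`k (g z) ^ d = (k z ^ n) ^ d`, so `k (g z) / k z ^ n` takes values in the finite set of `d`-th roots
of unity and is a constant `ζ` by connectedness of the circle. Choosing `c` with `c ^ (n - 1) = ζ`,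
which is where `n ≥ 2` enters, the homeomorphism `z ↦ c * k z` conjugates `g` to `z ↦ zⁿ`.
-/

/-- An interior extremum between two points of equal value would contradict openness. -/
lemma injective_of_isOpenMap_real {P : ℝ → ℝ} (hc : Continuous P) (ho : IsOpenMap P) :
    Function.Injective P := by
  have key : ∀ a b, a < b → P a ≠ P b := by
    intro a b hab h
    obtain ⟨c, -, hcx⟩ := exists_isLocalExtr_Ioo hab hc.continuousOn h
    have hmap : Filter.map P (nhds c) = nhds (P c) :=
      le_antisymm hc.continuousAt (ho.nhds_le c)
    rcases hcx with h1 | h1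
    · have h2 : ∀ᶠ y in nhds (P c), P c ≤ y := by
        rw [← hmap]; exact h1
      obtain ⟨y, hy, hy'⟩ := (h2.filter_mono (nhdsWithin_le_nhds (s := Set.Iio (P c)))).and
        self_mem_nhdsWithin |>.exists
      exact absurd hy (not_le.2 hy')
    · have h2 : ∀ᶠ y in nhds (P c), y ≤ P c := by
        rw [← hmap]; exact h1
      obtain ⟨y, hy, hy'⟩ := (h2.filter_mono (nhdsWithin_le_nhds (s := Set.Ioi (P c)))).and
        self_mem_nhdsWithin |>.exists
      exact absurd hy (not_le.2 hy')
  intro a b h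
  rcases lt_trichotomy a b with h1 | h1 | h1
  · exact absurd h (key a b h1)
  · exact h1
  · exact absurd h.symm (key b a h1)

/-- An injective continuous map of the line commuting with the translation by `2π` descends to
a homeomorphism of the circle. -/
lemma exists_homeomorph_of_equivariant {Q : ℝ → ℝ} (hc : Continuous Q)
    (hi : Function.Injective Q) (hQ : ∀ x, Q (x + 2 * Real.pi) = Q x + 2 * Real.pi) :
    ∃ k : Circle ≃ₜ Circle, ∀ x, k (Circle.exp x) = Circle.exp (Q x) := by
  have hQz : ∀ (m : ℤ) (x : ℝ), Q (x + m * (2 * Real.pi)) = Q x + m * (2 * Real.pi) := by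
    -- `Q - id` is `2π`-periodic
    have hper : Function.Periodic (fun x => Q x - x) (2 * Real.pi) := by
      intro x
      simp only [hQ]
      ring
    intro m x
    have := (hper.int_mul m) x
    linarith
  let k : Circle → Circle := fun z => Circle.exp (Q (Complex.arg z))
  have hk : ∀ x, k (Circle.exp x) = Circle.exp (Q x) := by
    intro x
    obtain ⟨m, hm⟩ := Circle.exp_eq_exp.1 (Circle.exp_arg (Circle.exp x))
    simp only [k]
    rw [hm, hQz]
    exact Circle.exp_eq_exp.2 ⟨m, rfl⟩
  have hkc : Continuous k := by
    have hq : Topology.IsQuotientMap Circle.exp :=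
      isLocalHomeomorph_circleExp.isOpenMap.isQuotientMap
        isLocalHomeomorph_circleExp.continuous Circle.exp_surjective
    rw [hq.continuous_iff]
    have : k ∘ Circle.exp = Circle.exp ∘ Q := funext hk
    rw [this]
    exact isLocalHomeomorph_circleExp.continuous.comp hc
  have hki : Function.Injective k := by
    intro z w h
    obtain ⟨x, rfl⟩ := Circle.exp_surjective z
    obtain ⟨y, rfl⟩ := Circle.exp_surjective w
    rw [hk, hk] at h
    obtain ⟨m, hm⟩ := Circle.exp_eq_exp.1 h
    rw [← hQz] at hm
    exact Circle.exp_eq_exp.2 ⟨m, hi hm⟩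
  have hks : Function.Surjective k := by
    intro w
    -- `Q` takes all values in the fundamental domain `[Q 0, Q 0 + 2π]`
    obtain ⟨y, hy, rfl⟩ : ∃ y ∈ Set.Ico (Q 0) (Q 0 + 2 * Real.pi), Circle.exp y = w := by
      obtain ⟨y, rfl⟩ := Circle.exp_surjective w
      obtain ⟨y', hy', he⟩ := Circle.periodic_exp.exists_mem_Ico Real.two_pi_pos y (Q 0)
      exact ⟨y', hy', he.symm⟩
    have h0 : Q (2 * Real.pi) = Q 0 + 2 * Real.pi := by simpa using hQ 0
    have hy' : y ∈ Set.Icc (Q 0) (Q (2 * Real.pi)) := by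
      rw [h0]; exact ⟨hy.1, hy.2.le⟩
    obtain ⟨x, -, rfl⟩ := intermediate_value_Icc Real.two_pi_pos.le hc.continuousOn hy'
    exact ⟨Circle.exp x, hk x⟩
  exact ⟨Continuous.homeoOfEquivCompactToT2 (f := Equiv.ofBijective k ⟨hki, hks⟩) hkc, hk⟩

/-- Up to a homeomorphism of the source, a covering map of the circle is `z ↦ z ^ d`, `d ≠ 0`. -/
lemma exists_homeomorph_zpow {p : Circle → Circle} (hp : IsCoveringMap p) :
    ∃ (k : Circle ≃ₜ Circle) (d : ℤ), d ≠ 0 ∧ ∀ z, p z = k z ^ d := by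
  have hexp := isLocalHomeomorph_circleExp
  obtain ⟨e₀, he₀⟩ := Circle.exp_surjective (p (Circle.exp 0))
  obtain ⟨P, ⟨-, hP⟩, -⟩ := Circle.isCoveringMap_exp.existsUnique_continuousMap_lifts
    (⟨p ∘ Circle.exp, hp.continuous.comp hexp.continuous⟩ : C(ℝ, Circle)) 0 e₀ he₀
  have hP' : Circle.exp ∘ P = p ∘ Circle.exp := hP
  have hPx : ∀ x, Circle.exp (P x) = p (Circle.exp x) := congrFun hP'
  have hPl : IsLocalHomeomorph P := by
    refine IsLocalHomeomorph.of_comp (g := Circle.exp) ?_ hexp P.continuous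
    rw [hP']
    exact hp.isLocalHomeomorph.comp hexp
  have hPi := injective_of_isOpenMap_real P.continuous hPl.isOpenMap
  obtain ⟨d, hd⟩ : ∃ d : ℤ, P (0 + 2 * Real.pi) = P 0 + d * (2 * Real.pi) := by
    apply Circle.exp_eq_exp.1
    rw [hPx, hPx, Circle.exp_add_two_pi]
  -- both sides are lifts of `p ∘ exp` that agree at `0`
  have hPd : ∀ x, P (x + 2 * Real.pi) = P x + d * (2 * Real.pi) := by
    have := Circle.isCoveringMap_exp.eq_of_comp_eq
      (g₁ := fun x => P (x + 2 * Real.pi)) (g₂ := fun x => P x + d * (2 * Real.pi))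
      (by fun_prop) (by fun_prop)
      (by
        ext1 x
        simp only [Function.comp_apply]
        rw [hPx, Circle.exp_add_two_pi, Circle.exp_eq_exp.2 ⟨d, rfl⟩, hPx]) 0 hd
    exact congrFun this
  have hd0 : d ≠ 0 := by
    rintro rfl
    have h : 0 + 2 * Real.pi = 0 := hPi (hd.trans (by simp))
    have := Real.pi_pos
    linarith
  have hdR : (d : ℝ) ≠ 0 := Int.cast_ne_zero.2 hd0
  obtain ⟨k, hk⟩ := exists_homeomorph_of_equivariant (Q := fun x => P x / d) (by fun_prop)
    (fun x y h => hPi ((div_left_inj' hdR).1 h)) (fun x => by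
      simp only [hPd]
      field_simp)
  refine ⟨k, d, hd0, fun z => ?_⟩
  obtain ⟨x, rfl⟩ := Circle.exp_surjective z
  rw [hk, ← hPx, ← Circle.exp_zsmul, zsmul_eq_mul, mul_div_cancel₀ _ hdR]

lemma finite_circle_zpow_eq_one {d : ℤ} (hd : d ≠ 0) : {r : Circle | r ^ d = 1}.Finite := by
  have hn : 0 < d.natAbs := Int.natAbs_pos.2 hd
  have h : {r : Circle | r ^ d = 1} ⊆
      (fun r : Circle => (r : ℂ)) ⁻¹' (Polynomial.nthRootsFinset d.natAbs (1 : ℂ)) := by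
    intro r hr
    have h1 : r ^ d.natAbs = 1 := pow_natAbs_eq_one.2 hr
    simp only [Set.mem_preimage, Finset.mem_coe, Polynomial.mem_nthRootsFinset hn]
    exact_mod_cast congrArg (fun r : Circle => (r : ℂ)) h1
  exact ((Finset.finite_toSet _).preimage Circle.coe_injective.injOn).subset h

/-- The Claim inside Lemma 3.10: if `π ∘ g = f ∘ π` for a self-covering `π` of the
circle and continuous self-maps `f, g`, and `f` is topologically conjugate to
`z ↦ zⁿ` (`n ≥ 2`), then so is `g`. -/
theorem stmt7 (n : ℕ) (hn : 2 ≤ n)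
    (f g π : Circle → Circle) (hf : Continuous f) (hg : Continuous g)
    (hπ : IsCoveringMap π) (hsemi : π ∘ g = f ∘ π)
    (hfc : ∃ h : Circle ≃ₜ Circle, ∀ z : Circle, h (f z) = (h z) ^ n) :
    ∃ h' : Circle ≃ₜ Circle, ∀ z : Circle, h' (g z) = (h' z) ^ n := by
  obtain ⟨h, hh⟩ := hfc
  obtain ⟨k, d, hd, hk⟩ := exists_homeomorph_zpow (hπ.homeomorph_comp h)
  let r : Circle → Circle := fun z => k (g z) / k z ^ n
  have hrc : Continuous r := by
    have := k.continuous
    fun_prop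
  have hr : ∀ z, r z ^ d = 1 := by
    intro z
    have h1 : k (g z) ^ d = (k z ^ n) ^ d := by
      rw [← hk (g z), ← zpow_natCast, zpow_comm, ← hk z, zpow_natCast]
      simp only [Function.comp_apply]
      rw [← hh, ← Function.comp_apply (f := π), hsemi, Function.comp_apply]
    simp only [r]
    rw [div_zpow, h1, div_self']
  have hconn : IsPreconnected (Set.univ : Set Circle) := by
    rw [← Circle.exp_surjective.range_eq]
    exact isPreconnected_range isLocalHomeomorph_circleExp.continuous
  have hsub : (r '' Set.univ).Subsingleton :=
    (finite_circle_zpow_eq_one hd).countable.isTotallyDisconnected _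
      (by rintro _ ⟨z, -, rfl⟩; exact hr z) (hconn.image r hrc.continuousOn)
  have hconst : ∀ z, r z = r 1 := fun z => hsub ⟨z, trivial, rfl⟩ ⟨1, trivial, rfl⟩
  obtain ⟨m, rfl⟩ : ∃ m, n = m + 2 := ⟨n - 2, by omega⟩
  obtain ⟨c, hc⟩ : ∃ c : Circle, c ^ (m + 1) = r 1 := by
    obtain ⟨t, ht⟩ := Circle.exp_surjective (r 1)
    refine ⟨Circle.exp (t / (m + 1 : ℕ)), ?_⟩
    rw [← zpow_natCast, ← Circle.exp_zsmul, zsmul_eq_mul, Int.cast_natCast,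
      mul_div_cancel₀ _ (Nat.cast_ne_zero.2 m.succ_ne_zero), ht]
  refine ⟨k.trans (Homeomorph.mulLeft c), fun z => ?_⟩
  have h2 : k (g z) = r 1 * k z ^ (m + 2) := by
    rw [← hconst z]; simp [r]
  simp only [Homeomorph.trans_apply, Homeomorph.coe_mulLeft]
  rw [h2, ← hc, mul_pow, ← mul_assoc, ← pow_succ']
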